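/- The graph Δ obtained by gluing a star graph S₃ to K₃,₃ along three pairwise non-adjacent vertices contains a topologically embedded K₃,₃ and is non-planar; moreover Δ contains no two vertex-disjoint cycles, since every cycle in Δ passes through at least 4 of the 7 vertices of Δ. -/

import Mathlib

namespace GraphRealization

/-- The gluing relation for the geometric realization of a graph: each
endpoint of each edge-interval is identified with the corresponding vertex. -/
inductive glueRel {V E : Type} (ends : E → V × V) :
    (E × unitInterval) ⊕ V → (E × unitInterval) ⊕ V → Prop
  | zero (e : E) : glueRel ends (Sum.inl (e, 0)) (Sum.inr (ends e).1)
  | one (e : E) : glueRel ends (Sum.inl (e, 1)) (Sum.inr (ends e).2)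

/-- The geometric realization of the graph with vertex set `V`, edge set `E`
and endpoint map `ends`: one copy of the unit interval for each edge, glued to
the vertices along `ends`. -/
def Realization {V E : Type} (ends : E → V × V) : Type :=
  Quot (glueRel ends)

instance {V E : Type} (ends : E → V × V) : TopologicalSpace (Realization ends) :=
  letI : TopologicalSpace V := ⊥
  letI : TopologicalSpace E := ⊥
  TopologicalSpace.coinduced (Quot.mk (glueRel ends)) inferInstance

end GraphRealization

namespace GraphRealization

/-- The complete bipartite graph `K₃,₃`, with parts `{0, 1, 2}` (the `aᵢ`) and
`{3, 4, 5}` (the `bⱼ`). -/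
def k33Ends : Fin 9 → Fin 6 × Fin 6 :=
  ![(0, 3), (0, 4), (0, 5), (1, 3), (1, 4), (1, 5), (2, 3), (2, 4), (2, 5)]

/-- The graph `Δ`: the union of `K₃,₃` (parts `{0, 1, 2} = {a₁, a₂, a₃}` and
`{3, 4, 5} = {b₁, b₂, b₃}`) with a star `S₃` centered at `6 = c` whose three
leaves are identified with the pairwise non-adjacent vertices `a₁, a₂, a₃`. -/
def deltaEnds : Fin 12 → Fin 7 × Fin 7 :=
  ![(0, 3), (0, 4), (0, 5), (1, 3), (1, 4), (1, 5), (2, 3), (2, 4), (2, 5),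
    (6, 0), (6, 1), (6, 2)]

/-- A combinatorial cycle in a graph: a cyclic sequence of distinct vertices
joined by distinct edges. -/
def IsCycle {V E : Type} (ends : E → V × V) {n : ℕ}
    (vs : Fin (n + 1) → V) (es : Fin (n + 1) → E) : Prop :=
  Function.Injective vs ∧ Function.Injective es ∧
    ∀ i, ends (es i) = (vs i, vs (i + 1)) ∨ ends (es i) = (vs (i + 1), vs i)

open scoped unitInterval Finset

section Lifting

instance : ContractibleSpace I :=
  (convex_Icc (0 : ℝ) 1).contractibleSpace ⟨0, unitInterval.zero_mem⟩

instance : LocallyPathConnectedSpace I :=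
  (convex_Icc (0 : ℝ) 1).locallyPathConnectedSpace

theorem exists_continuousMap_exp_eq {X : Type*} [TopologicalSpace X] [SimplyConnectedSpace X]
    [LocallyPathConnectedSpace X] (g : C(X, ℂ)) (hg : ∀ x, g x ≠ 0) :
    ∃ l : C(X, ℂ), ∀ x, Complex.exp (l x) = g x := by
  obtain ⟨x₀⟩ : Nonempty X := inferInstance
  obtain ⟨l, ⟨-, hl⟩, -⟩ := Complex.isCoveringMapOn_exp.existsUnique_continuousMap_lifts g
    (Complex.exp_log (hg x₀)) hg
  exact ⟨l, congrFun hl⟩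

/-- The total change, as `t` runs from `0` to `1`, of a continuous logarithm of `z - γ t`. Its
imaginary part is the angle swept out by `γ` as seen from `z`. -/
noncomputable def logChange (z : ℂ) (γ : C(I, ℂ)) (hz : ∀ t, z ≠ γ t) : ℂ :=
  have hlog := exists_continuousMap_exp_eq (.const I z - γ) fun t => sub_ne_zero.2 (hz t)
  hlog.choose 1 - hlog.choose 0

variable {z : ℂ} {γ : C(I, ℂ)}

theorem exp_logChange (hz : ∀ t, z ≠ γ t) :
    Complex.exp (logChange z γ hz) = (z - γ 1) / (z - γ 0) := by
  have hlog := exists_continuousMap_exp_eq (.const I z - γ) fun t => sub_ne_zero.2 (hz t)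
  rw [logChange, Complex.exp_sub, hlog.choose_spec, hlog.choose_spec]
  rfl

theorem logChange_eq_sub (hz : ∀ t, z ≠ γ t) {c : ℂ} {l : C(I, ℂ)}
    (hl : ∀ t, Complex.exp (l t) = c * (z - γ t)) : logChange z γ hz = l 1 - l 0 := by
  have hlog := exists_continuousMap_exp_eq (.const I z - γ) fun t => sub_ne_zero.2 (hz t)
  have hexp (t : I) : Complex.exp (l t - hlog.choose t) = c := by
    rw [Complex.exp_sub, hl, hlog.choose_spec]
    exact mul_div_cancel_right₀ c (sub_ne_zero.2 (hz t))
  have hconst : l 1 - hlog.choose 1 = l 0 - hlog.choose 0 :=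
    Complex.isCoveringMap_exp.const_of_comp (g := fun t => l t - hlog.choose t) (by fun_prop)
      (fun s t => Subtype.ext ((hexp s).trans (hexp t).symm)) 1 0
  rw [logChange]
  linear_combination -hconst

theorem exists_logChange_eq_add_int_mul (hz : ∀ t, z ≠ γ t) {l₀ l₁ : ℂ}
    (h₀ : Complex.exp l₀ = z - γ 0) (h₁ : Complex.exp l₁ = z - γ 1) :
    ∃ n : ℤ, logChange z γ hz = l₁ - l₀ + n * (2 * Real.pi * Complex.I) := by
  rw [← Complex.exp_eq_exp_iff_exists_int, exp_logChange, Complex.exp_sub, h₀, h₁]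

/-- A logarithm of `p s - q t` exists on the whole square, so its changes along the two routes
from `(0, 0)` to `(1, 1)` agree. -/
theorem logChange_add_logChange_eq {p q : C(I, ℂ)} (hpq : ∀ s t, p s ≠ q t) :
    logChange (p 0) q (hpq 0) + logChange (q 1) p (fun s => (hpq s 1).symm) =
      logChange (q 0) p (fun s => (hpq s 0).symm) + logChange (p 1) q (hpq 1) := by
  obtain ⟨l, hl⟩ := exists_continuousMap_exp_eq
    (p.comp ContinuousMap.fst - q.comp ContinuousMap.snd : C(I × I, ℂ))
    fun x => sub_ne_zero.2 (hpq x.1 x.2)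
  have vertical (s : I) : logChange (p s) q (hpq s) = l (s, 1) - l (s, 0) :=
    logChange_eq_sub (c := 1) (l := ⟨fun t => l (s, t), by fun_prop⟩) _ fun t => by simp [hl]
  have horizontal (t : I) :
      logChange (q t) p (fun s => (hpq s t).symm) = l (1, t) - l (0, t) :=
    logChange_eq_sub (c := -1) (l := ⟨fun s => l (s, t), by fun_prop⟩) _ fun s => by simp [hl]
  rw [vertical, vertical, horizontal, horizontal]
  ring

end Lifting

section VanKampen

variable {V E : Type*}

/-- Two edges are vertex-disjoint if they have no end in common. -/
def VertexDisjoint (ends : E → V × V) (e f : E) : Prop :=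
  (ends e).1 ≠ (ends f).1 ∧ (ends e).1 ≠ (ends f).2 ∧
    (ends e).2 ≠ (ends f).1 ∧ (ends e).2 ≠ (ends f).2

instance [DecidableEq V] (ends : E → V × V) : DecidableRel (VertexDisjoint ends) :=
  fun _ _ => inferInstanceAs (Decidable (_ ∧ _))

theorem VertexDisjoint.symm {ends : E → V × V} {e f : E} (h : VertexDisjoint ends e f) :
    VertexDisjoint ends f e :=
  ⟨h.1.symm, h.2.2.1.symm, h.2.1.symm, h.2.2.2.symm⟩

theorem vertexDisjoint_comm {ends : E → V × V} (e f : E) :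
    VertexDisjoint ends e f ↔ VertexDisjoint ends f e :=
  ⟨.symm, .symm⟩

theorem not_vertexDisjoint_self {ends : E → V × V} (e : E) : ¬ VertexDisjoint ends e e :=
  fun h => h.1 rfl

/-- An almost embedding of a graph in the plane: edges without a common end are drawn as disjoint
arcs, while the arcs of adjacent edges, and each single arc, may intersect freely. -/
structure AlmostEmbedding (ends : E → V × V) where
  pos : V → ℂ
  arc : E → C(I, ℂ)
  arc_zero : ∀ e, arc e 0 = pos (ends e).1
  arc_one : ∀ e, arc e 1 = pos (ends e).2
  arc_ne_arc : ∀ {e f}, VertexDisjoint ends e f → ∀ s t, arc e s ≠ arc f t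

variable [LinearOrder V]

/-- A logarithm of `P u - P v`, chosen so that exchanging `u` and `v` changes it by exactly `πi`,
with the sign given by the order of `u` and `v`. -/
noncomputable def vertexLog (P : V → ℂ) (u v : V) : ℂ :=
  if u < v then Complex.log (P u - P v) else Complex.log (P v - P u) + Real.pi * Complex.I

theorem exp_vertexLog {P : V → ℂ} {u v : V} (h : P u ≠ P v) :
    Complex.exp (vertexLog P u v) = P u - P v := by
  unfold vertexLog
  split_ifs
  · exact Complex.exp_log (sub_ne_zero.2 h)
  · rw [Complex.exp_add, Complex.exp_log (sub_ne_zero.2 h.symm), Complex.exp_pi_mul_I]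
    ring

theorem vertexLog_sub_swap (P : V → ℂ) {u v : V} (h : u ≠ v) :
    vertexLog P u v - vertexLog P v u =
      (2 * (if v < u then 1 else 0) - 1) * (Real.pi * Complex.I) := by
  rcases h.lt_or_gt with huv | hvu
  · rw [vertexLog, vertexLog, if_pos huv, if_neg huv.not_gt, if_neg huv.not_gt]
    ring
  · rw [vertexLog, vertexLog, if_neg hvu.not_gt, if_pos hvu, if_pos hvu]
    ring

/-- The parity of the number of crossings of the chords `e` and `f` when the vertices are placed on
a circle in their linear order. Chords with four distinct ends cross when their ends interleave,
that is, when the number of pairs consisting of an end of `f` preceding an end of `e` is odd. -/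
def chordCrossing (ends : E → V × V) (e f : E) : ZMod 2 :=
  (if (ends f).1 < (ends e).1 then 1 else 0) + (if (ends f).2 < (ends e).1 then 1 else 0) +
    (if (ends f).1 < (ends e).2 then 1 else 0) + (if (ends f).2 < (ends e).2 then 1 else 0)

namespace AlmostEmbedding

variable {ends : E → V × V} (D : AlmostEmbedding ends)

/-- `n v e` is the number of turns that the arc of `e` makes as seen from `v`, measured relative to
the chosen logarithms of the differences of vertices; it is arbitrary when the arc meets `v`. -/
def IsTurning (n : V → E → ℤ) : Prop :=
  ∀ v e (hv : ∀ t, D.pos v ≠ D.arc e t), logChange (D.pos v) (D.arc e) hv =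
    vertexLog D.pos v (ends e).2 - vertexLog D.pos v (ends e).1 +
      n v e * (2 * Real.pi * Complex.I)

theorem exists_isTurning : ∃ n, D.IsTurning n := by
  suffices ∀ v e, ∃ m : ℤ, ∀ hv : ∀ t, D.pos v ≠ D.arc e t, logChange (D.pos v) (D.arc e) hv =
      vertexLog D.pos v (ends e).2 - vertexLog D.pos v (ends e).1 +
        m * (2 * Real.pi * Complex.I) by
    choose n hn using this
    exact ⟨n, hn⟩
  intro v e
  by_cases hv : ∀ t, D.pos v ≠ D.arc e t
  · obtain ⟨m, hm⟩ := exists_logChange_eq_add_int_mul hv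
      (l₀ := vertexLog D.pos v (ends e).1) (l₁ := vertexLog D.pos v (ends e).2)
      (by rw [D.arc_zero, exp_vertexLog (D.arc_zero e ▸ hv 0)])
      (by rw [D.arc_one, exp_vertexLog (D.arc_one e ▸ hv 1)])
    exact ⟨m, fun _ => hm⟩
  · exact ⟨0, fun hv' => absurd hv' hv⟩

variable {D} {n : V → E → ℤ} {e f : E}

theorem IsTurning.add_add_sub_eq (hn : D.IsTurning n) (hef : VertexDisjoint ends e f) :
    n (ends e).1 f + n (ends f).2 e - n (ends f).1 e - n (ends e).2 f =
      (if (ends f).1 < (ends e).1 then 1 else 0) - (if (ends f).2 < (ends e).1 then 1 else 0) -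
        (if (ends f).1 < (ends e).2 then 1 else 0) +
        (if (ends f).2 < (ends e).2 then 1 else 0) := by
  have square := logChange_add_logChange_eq (D.arc_ne_arc hef)
  simp only [D.arc_zero, D.arc_one] at square
  rw [hn, hn, hn, hn] at square
  have h₁₁ := vertexLog_sub_swap D.pos hef.1
  have h₁₂ := vertexLog_sub_swap D.pos hef.2.1
  have h₂₁ := vertexLog_sub_swap D.pos hef.2.2.1
  have h₂₂ := vertexLog_sub_swap D.pos hef.2.2.2
  have key : (n (ends e).1 f + n (ends f).2 e - n (ends f).1 e - n (ends e).2 f : ℂ) =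
      (if (ends f).1 < (ends e).1 then 1 else 0) - (if (ends f).2 < (ends e).1 then 1 else 0) -
        (if (ends f).1 < (ends e).2 then 1 else 0) +
        (if (ends f).2 < (ends e).2 then 1 else 0) := by
    apply mul_right_cancel₀ Complex.two_pi_I_ne_zero
    linear_combination square - h₁₂ + h₁₁ + h₂₂ - h₂₁
  exact_mod_cast key

theorem IsTurning.add_eq_chordCrossing (hn : D.IsTurning n) (hef : VertexDisjoint ends e f) :
    (n (ends f).1 e + n (ends f).2 e + (n (ends e).1 f + n (ends e).2 f) : ZMod 2) =
      chordCrossing ends e f := by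
  have key := congrArg (Int.cast : ℤ → ZMod 2) (hn.add_add_sub_eq hef)
  push_cast [CharTwo.sub_eq_add] at key
  rw [chordCrossing]
  linear_combination key

end AlmostEmbedding

theorem sum_add_eq_zero_of_even {ends : E → V × V} {S : Finset E}
    (hS : ∀ v, Even (#{f ∈ S | (ends f).1 = v} + #{f ∈ S | (ends f).2 = v})) (g : V → ZMod 2) :
    ∑ f ∈ S, (g (ends f).1 + g (ends f).2) = 0 := by
  let T := S.image (fun f => (ends f).1) ∪ S.image (fun f => (ends f).2)
  have fiberwise (π : E → V) (hπ : ∀ f ∈ S, π f ∈ T) :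
      ∑ f ∈ S, g (π f) = ∑ v ∈ T, #{f ∈ S | π f = v} * g v := by
    simp only [← nsmul_eq_mul, ← Finset.sum_const, Finset.sum_fiberwise_of_maps_to' hπ]
  rw [Finset.sum_add_distrib,
    fiberwise _ fun f hf => Finset.mem_union_left _ (Finset.mem_image_of_mem _ hf),
    fiberwise _ fun f hf => Finset.mem_union_right _ (Finset.mem_image_of_mem _ hf),
    ← Finset.sum_add_distrib]
  refine Finset.sum_eq_zero fun v _ => ?_
  rw [← add_mul, ← Nat.cast_add, ZMod.natCast_eq_zero_iff_even.2 (hS v), zero_mul]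

theorem sum_sum_filter_eq_sum_sum_Ioi {α M : Type*} [AddCommMonoid M] [Fintype α] [LinearOrder α]
    [LocallyFiniteOrderTop α] [LocallyFiniteOrderBot α] {r : α → α → Prop} [DecidableRel r]
    (irrefl : ∀ a, ¬ r a a) (comm : ∀ a b, r a b ↔ r b a) (F : α → α → M) :
    ∑ a, ∑ b with r a b, F a b = ∑ a, ∑ b ∈ Finset.Ioi a with r a b, (F a b + F b a) := by
  let G (b a : α) : M := if r a b then F a b else 0
  calc ∑ a, ∑ b with r a b, F a b
      = ∑ a, ∑ b ∈ {a}ᶜ, G b a := by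
        refine Finset.sum_congr rfl fun a _ => ?_
        rw [Finset.sum_filter, ← Finset.sum_compl_add_sum {a}, Finset.sum_singleton,
          if_neg (irrefl a), add_zero]
    _ = ∑ a, ∑ b ∈ Finset.Ioi a, (G b a + G a b) :=
        (Finset.sum_sum_Ioi_add_eq_sum_sum_off_diag G).symm
    _ = ∑ a, ∑ b ∈ Finset.Ioi a with r a b, (F a b + F b a) := by
        simp only [G, Finset.sum_filter, comm _ _, ite_add_ite, add_zero]

theorem AlmostEmbedding.sum_chordCrossing_eq_zero [Fintype E] [LinearOrder E]
    [LocallyFiniteOrderTop E] [LocallyFiniteOrderBot E] {ends : E → V × V}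
    (D : AlmostEmbedding ends)
    (heven : ∀ e v, Even (#{f | VertexDisjoint ends e f ∧ (ends f).1 = v} +
      #{f | VertexDisjoint ends e f ∧ (ends f).2 = v})) :
    ∑ e, ∑ f ∈ Finset.Ioi e with VertexDisjoint ends e f, chordCrossing ends e f = 0 := by
  obtain ⟨n, hn⟩ := D.exists_isTurning
  calc ∑ e, ∑ f ∈ Finset.Ioi e with VertexDisjoint ends e f, chordCrossing ends e f
      = ∑ e, ∑ f ∈ Finset.Ioi e with VertexDisjoint ends e f,
          (n (ends f).1 e + n (ends f).2 e + (n (ends e).1 f + n (ends e).2 f) : ZMod 2) :=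
        Finset.sum_congr rfl fun e _ => Finset.sum_congr rfl fun f hf =>
          (hn.add_eq_chordCrossing (Finset.mem_filter.1 hf).2).symm
    _ = ∑ e, ∑ f with VertexDisjoint ends e f, (n (ends f).1 e + n (ends f).2 e : ZMod 2) :=
        (sum_sum_filter_eq_sum_sum_Ioi not_vertexDisjoint_self vertexDisjoint_comm
          fun e f => (n (ends f).1 e + n (ends f).2 e : ZMod 2)).symm
    _ = 0 := Finset.sum_eq_zero fun e _ => sum_add_eq_zero_of_even
        (by simpa only [Finset.filter_filter] using heven e) (fun v => (n v e : ZMod 2))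

end VanKampen

section Realization

variable {V E V' E' : Type} {ends : E → V × V} {ends' : E' → V' × V'}

open Classical in
/-- The representative of a point of the realization that is a vertex whenever possible. Two
points are glued together exactly when their normal forms agree. -/
noncomputable def normalForm (ends : E → V × V) : (E × I) ⊕ V → (E × I) ⊕ V
  | Sum.inl (e, t) =>
    if t = 0 then Sum.inr (ends e).1 else if t = 1 then Sum.inr (ends e).2 else Sum.inl (e, t)
  | Sum.inr v => Sum.inr v

theorem normalForm_eq_of_glueRel {x y : (E × I) ⊕ V} (h : glueRel ends x y) :
    normalForm ends x = normalForm ends y := by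
  cases h <;> simp [normalForm]

theorem mk_normalForm (x : (E × I) ⊕ V) :
    Quot.mk (glueRel ends) (normalForm ends x) = Quot.mk (glueRel ends) x := by
  rcases x with ⟨e, t⟩ | v
  · simp only [normalForm]
    split_ifs with h₀ h₁
    · rw [h₀, Quot.sound (glueRel.zero e)]
    · rw [h₁, Quot.sound (glueRel.one e)]
    · rfl
  · rfl

theorem mk_eq_mk_iff {x y : (E × I) ⊕ V} :
    Quot.mk (glueRel ends) x = Quot.mk (glueRel ends) y ↔ normalForm ends x = normalForm ends y :=
  ⟨congrArg (Quot.lift (normalForm ends) fun _ _ => normalForm_eq_of_glueRel),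
    fun h => by rw [← mk_normalForm, h, mk_normalForm]⟩

namespace Realization

/-- The point of the realization given by a vertex. -/
def vertex (ends : E → V × V) (v : V) : Realization ends :=
  Quot.mk _ (Sum.inr v)

/-- The closed edge `e` of the realization, parametrized from its first to its second end. -/
def edge (ends : E → V × V) (e : E) : C(I, Realization ends) where
  toFun t := Quot.mk _ (Sum.inl (e, t))
  continuous_toFun := by
    let _ : TopologicalSpace V := ⊥
    let _ : TopologicalSpace E := ⊥
    have continuous_mk : Continuous (Quot.mk (glueRel ends) : _ → Realization ends) :=
      continuous_coinduced_rng
    exact continuous_mk.comp (by fun_prop)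

theorem edge_zero (e : E) : edge ends e 0 = vertex ends (ends e).1 :=
  Quot.sound (glueRel.zero e)

theorem edge_one (e : E) : edge ends e 1 = vertex ends (ends e).2 :=
  Quot.sound (glueRel.one e)

theorem edge_ne_edge {e f : E} (hef : VertexDisjoint ends e f) (s t : I) :
    edge ends e s ≠ edge ends f t := by
  obtain ⟨h₁₁, h₁₂, h₂₁, h₂₂⟩ := hef
  have hne : e ≠ f := fun h => h₁₁ (h ▸ rfl)
  intro h
  have hnf : normalForm ends (Sum.inl (e, s)) = normalForm ends (Sum.inl (f, t)) :=
    mk_eq_mk_iff.1 h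
  simp only [normalForm] at hnf
  split_ifs at hnf <;> simp_all

theorem continuous_of_edge {X : Type*} [TopologicalSpace X] {f : Realization ends → X}
    (hf : ∀ e, Continuous fun t => f (edge ends e t)) : Continuous f := by
  let _ : TopologicalSpace V := ⊥
  let _ : TopologicalSpace E := ⊥
  have _ : DiscreteTopology V := ⟨rfl⟩
  have _ : DiscreteTopology E := ⟨rfl⟩
  exact continuous_coinduced_dom.2 <| continuous_sum_dom.2
    ⟨continuous_prod_of_discrete_left.2 hf, continuous_of_discreteTopology⟩

/-- The map of realizations induced by an orientation-preserving morphism of graphs. -/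
def map (φ : E → E') (ψ : V → V') (h : ∀ e, ends' (φ e) = Prod.map ψ ψ (ends e)) :
    Realization ends → Realization ends' :=
  Quot.map (Sum.map (Prod.map φ id) ψ) <| by
    rintro _ _ (e | e)
    · simpa [h] using glueRel.zero (ends := ends') (φ e)
    · simpa [h] using glueRel.one (ends := ends') (φ e)

variable {φ : E → E'} {ψ : V → V'}

theorem normalForm_map (h : ∀ e, ends' (φ e) = Prod.map ψ ψ (ends e)) (x : (E × I) ⊕ V) :
    normalForm ends' (Sum.map (Prod.map φ id) ψ x) =
      Sum.map (Prod.map φ id) ψ (normalForm ends x) := by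
  rcases x with ⟨e, t⟩ | v
  · simp only [Sum.map_inl, Prod.map_apply, id_eq, normalForm, h]
    split_ifs <;> rfl
  · rfl

theorem continuous_map (h : ∀ e, ends' (φ e) = Prod.map ψ ψ (ends e)) :
    Continuous (map φ ψ h) :=
  continuous_of_edge fun e => (edge ends' (φ e)).continuous

theorem map_injective (h : ∀ e, ends' (φ e) = Prod.map ψ ψ (ends e))
    (hφ : Function.Injective φ) (hψ : Function.Injective ψ) :
    Function.Injective (map φ ψ h) := by
  rintro ⟨x⟩ ⟨y⟩ hxy
  have hnf := mk_eq_mk_iff.1 hxy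
  rw [normalForm_map h, normalForm_map h] at hnf
  exact mk_eq_mk_iff.2 ((hφ.prodMap Function.injective_id).sumMap hψ hnf)

end Realization

/-- The almost embedding given by a continuous injection of the realization into the plane. -/
noncomputable def AlmostEmbedding.ofInjective {f : Realization ends → ℂ} (hf : Continuous f)
    (hinj : Function.Injective f) : AlmostEmbedding ends where
  pos v := f (Realization.vertex ends v)
  arc e := .comp ⟨f, hf⟩ (Realization.edge ends e)
  arc_zero e := congrArg f (Realization.edge_zero e)
  arc_one e := congrArg f (Realization.edge_one e)
  arc_ne_arc hef s t := hinj.ne (Realization.edge_ne_edge hef s t)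

end Realization

section Cycles

variable {V E : Type} {ends : E → V × V} {n : ℕ} {vs : Fin (n + 1) → V} {es : Fin (n + 1) → E}

namespace IsCycle

theorem apply_succ_mem_iff (h : IsCycle ends vs es) {A : Finset V}
    (hA : ∀ e, (ends e).1 ∈ A ↔ (ends e).2 ∉ A) (i : Fin (n + 1)) :
    vs (i + 1) ∈ A ↔ vs i ∉ A := by
  have hi := hA (es i)
  rcases h.2.2 i with hends | hends <;> rw [hends] at hi <;> tauto

theorem apply_add_two_ne (h : IsCycle ends vs es)
    (hends : Function.Injective fun e => s((ends e).1, (ends e).2)) {A : Finset V}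
    (hA : ∀ e, (ends e).1 ∈ A ↔ (ends e).2 ∉ A) (i : Fin (n + 1)) : vs (i + 1 + 1) ≠ vs i := by
  intro hv
  have sym2_ends (j) : s((ends (es j)).1, (ends (es j)).2) = s(vs j, vs (j + 1)) := by
    rcases h.2.2 j with hj | hj <;> simp [hj]
  have hes : es (i + 1) = es i := hends <| by
    simp only [sym2_ends, hv, Sym2.eq_swap]
  have hmem := h.apply_succ_mem_iff hA i
  rw [h.2.1 hes] at hmem
  tauto

theorem two_le_card_filter_mem (h : IsCycle ends vs es)
    (hends : Function.Injective fun e => s((ends e).1, (ends e).2)) {A : Finset V}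
    (hA : ∀ e, (ends e).1 ∈ A ↔ (ends e).2 ∉ A) [DecidablePred (vs · ∈ A)] :
    2 ≤ #{i | vs i ∈ A} := by
  obtain ⟨i, hi⟩ : ∃ i, vs i ∈ A := by
    by_cases h₀ : vs 0 ∈ A
    · exact ⟨0, h₀⟩
    · exact ⟨0 + 1, (h.apply_succ_mem_iff hA 0).2 h₀⟩
  have hi₂ : vs (i + 1 + 1) ∈ A := by
    rw [h.apply_succ_mem_iff hA, h.apply_succ_mem_iff hA, not_not]
    exact hi
  exact Finset.one_lt_card.2 ⟨i + 1 + 1, by simpa using hi₂, i, by simpa using hi,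
    ne_of_apply_ne vs (h.apply_add_two_ne hends hA i)⟩

theorem exists_apply_eq_apply {m : ℕ} {vs' : Fin (m + 1) → V} {es' : Fin (m + 1) → E}
    (h : IsCycle ends vs es) (h' : IsCycle ends vs' es')
    (hends : Function.Injective fun e => s((ends e).1, (ends e).2)) {A : Finset V}
    (hA : ∀ e, (ends e).1 ∈ A ↔ (ends e).2 ∉ A) (hcard : #A ≤ 3) : ∃ i j, vs i = vs' j := by
  classical
  have image_subset {k : ℕ} (ws : Fin k → V) : Finset.image ws {i | ws i ∈ A} ⊆ A := by
    simp [Finset.image_subset_iff]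
  obtain ⟨v, hv⟩ := Finset.inter_nonempty_of_card_lt_card_add_card
    (image_subset vs) (image_subset vs') <| by
      rw [Finset.card_image_of_injective _ h.1, Finset.card_image_of_injective _ h'.1]
      have := h.two_le_card_filter_mem hends hA
      have := h'.two_le_card_filter_mem hends hA
      omega
  simp only [Finset.mem_inter, Finset.mem_image] at hv
  obtain ⟨⟨i, -, rfl⟩, j, -, hj⟩ := hv
  exact ⟨i, j, hj.symm⟩

end IsCycle

end Cycles

-- The edges vertex-disjoint from a given edge of `K₃,₃` form a `4`-cycle.
theorem even_card_vertexDisjoint_k33Ends (e : Fin 9) (v : Fin 6) :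
    Even (#{f | VertexDisjoint k33Ends e f ∧ (k33Ends f).1 = v} +
      #{f | VertexDisjoint k33Ends e f ∧ (k33Ends f).2 = v}) := by
  decide +revert

-- Of the `18` pairs of vertex-disjoint edges of `K₃,₃`, exactly the `9` pairs `aᵢbⱼ`, `aₖbₗ` with
-- `i < k` and `j < l` cross.
theorem sum_chordCrossing_k33Ends :
    ∑ e, ∑ f ∈ Finset.Ioi e with VertexDisjoint k33Ends e f, chordCrossing k33Ends e f = 1 := by
  decide

theorem isEmpty_almostEmbedding_k33Ends : IsEmpty (AlmostEmbedding k33Ends) :=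
  ⟨fun D => zero_ne_one <|
    (D.sum_chordCrossing_eq_zero even_card_vertexDisjoint_k33Ends).symm.trans
      sum_chordCrossing_k33Ends⟩

theorem not_exists_injective_k33Ends :
    ¬ ∃ f : Realization k33Ends → ℝ × ℝ, Continuous f ∧ Function.Injective f := by
  rintro ⟨f, hf, hinj⟩
  exact isEmpty_almostEmbedding_k33Ends.false <| .ofInjective
    (Complex.equivRealProdCLM.symm.continuous.comp hf)
    (Complex.equivRealProdCLM.symm.injective.comp hinj)

theorem exists_injective_k33Ends_deltaEnds :
    ∃ f : Realization k33Ends → Realization deltaEnds, Continuous f ∧ Function.Injective f := by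
  have ends_castAdd : ∀ e, deltaEnds (Fin.castAdd 3 e) =
      Prod.map Fin.castSucc Fin.castSucc (k33Ends e) := by decide
  exact ⟨.map _ _ ends_castAdd, Realization.continuous_map _,
    Realization.map_injective _ (Fin.castAdd_injective 9 3) (Fin.castSucc_injective 6)⟩

theorem deltaEnds_fst_mem_iff (e : Fin 12) :
    (deltaEnds e).1 ∈ ({0, 1, 2} : Finset (Fin 7)) ↔ (deltaEnds e).2 ∉ ({0, 1, 2} : Finset _) := by
  decide +revert

theorem injective_sym2_deltaEnds :
    Function.Injective fun e => s((deltaEnds e).1, (deltaEnds e).2) := by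
  decide

/-- The graph `Δ` obtained by gluing a star `S₃` to `K₃,₃`
along three pairwise non-adjacent vertices contains a topologically embedded
`K₃,₃` and is non-planar; moreover every cycle of `Δ` contains at least two of
the vertices `a₁, a₂, a₃`, so `Δ` contains no two vertex-disjoint cycles. -/
theorem delta_graph_properties :
    (∃ f : Realization k33Ends → Realization deltaEnds,
        Continuous f ∧ Function.Injective f) ∧
    (¬ ∃ f : Realization deltaEnds → ℝ × ℝ,
        Continuous f ∧ Function.Injective f) ∧
    (∀ (n : ℕ) (vs : Fin (n + 1) → Fin 7) (es : Fin (n + 1) → Fin 12),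
      IsCycle deltaEnds vs es →
      2 ≤ (Finset.univ.filter fun i => vs i = 0 ∨ vs i = 1 ∨ vs i = 2).card) ∧
    (∀ (n m : ℕ) (vs : Fin (n + 1) → Fin 7) (es : Fin (n + 1) → Fin 12)
        (vs' : Fin (m + 1) → Fin 7) (es' : Fin (m + 1) → Fin 12),
      IsCycle deltaEnds vs es → IsCycle deltaEnds vs' es' →
      ∃ i j, vs i = vs' j) := by
  refine ⟨exists_injective_k33Ends_deltaEnds, ?_, ?_, ?_⟩
  · rintro ⟨f, hf, hinj⟩
    obtain ⟨g, hg, hginj⟩ := exists_injective_k33Ends_deltaEnds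
    exact not_exists_injective_k33Ends ⟨f ∘ g, hf.comp hg, hinj.comp hginj⟩
  · intro n vs es h
    simpa using h.two_le_card_filter_mem injective_sym2_deltaEnds deltaEnds_fst_mem_iff
  · intro n m vs es vs' es' h h'
    exact h.exists_apply_eq_apply h' injective_sym2_deltaEnds deltaEnds_fst_mem_iff (by decide)

end GraphRealization
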